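/- Let j ∈ ℕ and x ∈ ℝ. Then the Hahn–Exton q-Bessel function J^q_j(x) tends to 𝒥_j(x) as q → 1 from below (q ranging over (0,1)), where 𝒥_j(x) = ∑_{m=0}^∞ (−1)^m x^{2m+j}/(m! (m+j)!). -/

import Mathlib

noncomputable section

/-- The q-factorial `(n)_q! = ∏_{k=1}^n (1-q^k)/(1-q)`. -/
def qFact (q : ℝ) (n : ℕ) : ℝ := ∏ k ∈ Finset.range n, (1 - q ^ (k + 1)) / (1 - q)

/-- The q-Pochhammer symbol `(a;q)_k = ∏_{i=0}^{k-1} (1 - a q^i)`. -/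
def qPoch (a q : ℝ) (k : ℕ) : ℝ := ∏ i ∈ Finset.range k, (1 - a * q ^ i)

/-- The q-Kummer function
`Φ^q(a,b;x) = ∑_{k=0}^∞ q^{k(k-1)/2} (a;q)_k / ((q;q)_k (b;q)_k) ((1-q)x)^k`. -/
def qKummer (q a b x : ℝ) : ℝ :=
  ∑' k : ℕ, q ^ (k * (k - 1) / 2) * qPoch a q k / (qPoch q q k * qPoch b q k) * ((1 - q) * x) ^ k

/-- The Hahn–Exton q-Bessel function `J^q_j(x) = (x^j/(j)_q!) Φ^q(0, q^{1+j}; (q-1)q x²)`. -/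
def qBessel (q : ℝ) (j : ℕ) (x : ℝ) : ℝ :=
  x ^ j / qFact q j * qKummer q 0 (q ^ (1 + j)) ((q - 1) * q * x ^ 2)

/-- The Bessel-type function `𝒥_j(x) = ∑_{m=0}^∞ (-1)^m x^{2m+j}/(m!(m+j)!)`,
equal to the classical Bessel function `J_j(2x)`. -/
def besselJJ (j : ℕ) (x : ℝ) : ℝ :=
  ∑' m : ℕ, (-1 : ℝ) ^ m * x ^ (2 * m + j) / (m.factorial * (m + j).factorial)

/-- The q-number as a polynomial. -/
def qNumAux (q : ℝ) (n : ℕ) : ℝ := ∑ i ∈ Finset.range n, q ^ i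

/-- Ratio factor of the q-series. -/
def qFac (q : ℝ) (j : ℕ) (x : ℝ) (i : ℕ) : ℝ :=
  q ^ i * (-(q * x ^ 2)) / (qNumAux q (i + 1) * qNumAux q (j + 1 + i))

lemma qNumAux_mul (q : ℝ) (n : ℕ) : 1 - q ^ n = (1 - q) * qNumAux q n := by
  have := geom_sum_mul q n
  unfold qNumAux
  linarith

lemma qNumAux_one (n : ℕ) : qNumAux 1 n = n := by simp [qNumAux]

lemma qNumAux_cont (n : ℕ) : Continuous (fun q => qNumAux q n) := by
  unfold qNumAux; fun_prop

lemma one_le_qNumAux {q : ℝ} (h : 0 < q) (n : ℕ) : 1 ≤ qNumAux q (n + 1) := by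
  unfold qNumAux
  rw [Finset.sum_range_succ']
  have : 0 ≤ ∑ i ∈ Finset.range n, q ^ (i + 1) := Finset.sum_nonneg fun i _ => by positivity
  simpa using this

lemma qNumAux_ge {q : ℝ} (h : 0 < q) (h1 : q < 1) (n : ℕ) :
    (n + 1) * q ^ n ≤ qNumAux q (n + 1) := by
  unfold qNumAux
  have : ∑ i ∈ Finset.range (n + 1), q ^ n ≤ ∑ i ∈ Finset.range (n + 1), q ^ i := by
    apply Finset.sum_le_sum
    intro i hi
    exact pow_le_pow_of_le_one h.le h1.le (by simp at hi; omega)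
  simpa using this

lemma qTerm_eq {q : ℝ} (h1 : q < 1) (j : ℕ) (x : ℝ) (k : ℕ) :
    q ^ (k * (k - 1) / 2) * qPoch 0 q k / (qPoch q q k * qPoch (q ^ (1 + j)) q k)
      * ((1 - q) * ((q - 1) * q * x ^ 2)) ^ k = ∏ i ∈ Finset.range k, qFac q j x i := by
  have e1 : q ^ (k * (k - 1) / 2) = ∏ i ∈ Finset.range k, q ^ i := by
    rw [Finset.prod_pow_eq_pow_sum, Finset.sum_range_id]
  have e2 : ((1 - q) * ((q - 1) * q * x ^ 2)) ^ k
      = ∏ i ∈ Finset.range k, ((1 - q) * ((q - 1) * q * x ^ 2)) := by simp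
  rw [e1, e2]
  unfold qPoch
  rw [← Finset.prod_mul_distrib, ← Finset.prod_mul_distrib, ← Finset.prod_div_distrib,
    ← Finset.prod_mul_distrib]
  refine Finset.prod_congr rfl fun i _ => ?_
  have a1 : 1 - q * q ^ i = (1 - q) * qNumAux q (i + 1) := by
    rw [← qNumAux_mul]; ring
  have a2 : 1 - q ^ (1 + j) * q ^ i = (1 - q) * qNumAux q (j + 1 + i) := by
    rw [← qNumAux_mul]; ring
  rw [a1, a2]
  unfold qFac
  have : 1 - q ≠ 0 := by linarith
  rw [show (1 - q) * qNumAux q (i + 1) * ((1 - q) * qNumAux q (j + 1 + i))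
    = (1 - q) ^ 2 * (qNumAux q (i + 1) * qNumAux q (j + 1 + i)) by ring]
  generalize qNumAux q (i + 1) * qNumAux q (j + 1 + i) = D
  rw [div_mul_eq_mul_div, show q ^ i * (1 - 0 * q ^ i) * ((1 - q) * ((q - 1) * q * x ^ 2))
    = (1 - q) ^ 2 * (q ^ i * (-(q * x ^ 2))) by ring, mul_div_mul_left _ _ (pow_ne_zero 2 this)]

lemma qFac_bound {q : ℝ} (h : 0 < q) (h1 : q < 1) (j : ℕ) (x : ℝ) (i : ℕ) :
    ‖qFac q j x i‖ ≤ x ^ 2 / (i + 1) := by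
  have b1 := qNumAux_ge h h1 i
  have b2 := one_le_qNumAux h (j + i)
  rw [show j + i + 1 = j + 1 + i by ring] at b2
  have b3 := one_le_qNumAux h i
  unfold qFac
  have p : 0 < qNumAux q (i + 1) * qNumAux q (j + 1 + i) := by positivity
  rw [norm_div, Real.norm_of_nonneg p.le, norm_mul, norm_neg, Real.norm_of_nonneg (by positivity),
    Real.norm_of_nonneg (by positivity), div_le_div_iff₀ p (by positivity)]
  have hx := sq_nonneg x
  calc q ^ i * (q * x ^ 2) * (i + 1) = x ^ 2 * (((i + 1) * q ^ i) * q) := by ring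
    _ ≤ x ^ 2 * (qNumAux q (i + 1) * qNumAux q (j + 1 + i)) := by
      gcongr
      linarith

lemma prod_bound (x : ℝ) (k : ℕ) :
    ∏ i ∈ Finset.range k, (x ^ 2 / ((i : ℝ) + 1)) = (x ^ 2) ^ k / k.factorial := by
  rw [Finset.prod_div_distrib, ← Finset.prod_range_add_one_eq_factorial,
    Finset.prod_const, Finset.card_range]
  push_cast
  rfl

lemma qFac_tendsto (j : ℕ) (x : ℝ) (i : ℕ) :
    Filter.Tendsto (fun q => qFac q j x i) (nhds 1) (nhds (qFac 1 j x i)) := by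
  have : ContinuousAt (fun q => qFac q j x i) 1 := by
    unfold qFac
    apply ContinuousAt.div
    · fun_prop
    · exact ((qNumAux_cont _).mul (qNumAux_cont _)).continuousAt
    · rw [qNumAux_one, qNumAux_one]; positivity
  exact this

lemma limit_term (j : ℕ) (x : ℝ) (m : ℕ) :
    x ^ j / j.factorial * ∏ i ∈ Finset.range m, qFac 1 j x i
      = (-1 : ℝ) ^ m * x ^ (2 * m + j) / (m.factorial * (m + j).factorial) := by
  induction m with
  | zero => simp
  | succ m ih =>
    rw [Finset.prod_range_succ, ← mul_assoc, ih]
    unfold qFac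
    rw [qNumAux_one, qNumAux_one, show m + 1 + j = (m + j) + 1 by ring, Nat.factorial_succ,
      Nat.factorial_succ]
    push_cast
    have : (m : ℝ) + j + 1 ≠ 0 := by positivity
    have : (j : ℝ) + 1 + m ≠ 0 := by positivity
    field_simp
    ring

lemma qFact_tendsto (j : ℕ) :
    Filter.Tendsto (fun q => qFact q j) (nhdsWithin 1 (Set.Ioo 0 1)) (nhds (j.factorial : ℝ)) := by
  have h : Filter.Tendsto (fun q => ∏ k ∈ Finset.range j, qNumAux q (k + 1))
      (nhdsWithin 1 (Set.Ioo 0 1)) (nhds (∏ k ∈ Finset.range j, qNumAux 1 (k + 1))) :=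
    tendsto_finsetProd _ fun i _ => ((qNumAux_cont _).tendsto 1).mono_left nhdsWithin_le_nhds
  have e : ∏ k ∈ Finset.range j, qNumAux 1 (k + 1) = (j.factorial : ℝ) := by
    rw [← Finset.prod_range_add_one_eq_factorial]
    simp only [qNumAux_one]
    push_cast
    rfl
  rw [e] at h
  refine h.congr' ?_
  filter_upwards [self_mem_nhdsWithin] with q hq
  unfold qFact
  refine Finset.prod_congr rfl fun i _ => ?_
  have : 1 - q ≠ 0 := by linarith [hq.2]
  rw [qNumAux_mul, mul_div_cancel_left₀ _ this]

/-- the Hahn–Exton q-Bessel function `J^q_j(x)` tends to `𝒥_j(x)`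
as `q → 1⁻` within `(0,1)`. -/
theorem qBessel_tendsto_bessel (j : ℕ) (x : ℝ) :
    Filter.Tendsto (fun q : ℝ => qBessel q j x)
      (nhdsWithin 1 (Set.Ioo 0 1)) (nhds (besselJJ j x)) := by
  have key : Filter.Tendsto (fun q : ℝ => ∑' k : ℕ, ∏ i ∈ Finset.range k, qFac q j x i)
      (nhdsWithin 1 (Set.Ioo 0 1)) (nhds (∑' k : ℕ, ∏ i ∈ Finset.range k, qFac 1 j x i)) := by
    refine tendsto_tsum_of_dominated_convergence
      (bound := fun k => (x ^ 2) ^ k / (k.factorial : ℝ)) (Real.summable_pow_div_factorial _) ?_ ?_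
    · intro k
      exact tendsto_finsetProd _ fun i _ => (qFac_tendsto j x i).mono_left nhdsWithin_le_nhds
    · filter_upwards [self_mem_nhdsWithin] with q hq k
      rw [norm_prod, ← prod_bound]
      exact Finset.prod_le_prod (fun i _ => norm_nonneg _)
        fun i _ => qFac_bound hq.1 hq.2 j x i
  have e : besselJJ j x
      = x ^ j / j.factorial * ∑' k : ℕ, ∏ i ∈ Finset.range k, qFac 1 j x i := by
    rw [← tsum_mul_left]
    unfold besselJJ
    exact tsum_congr fun m => (limit_term j x m).symm
  rw [e]
  have hf : (j.factorial : ℝ) ≠ 0 := by positivity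
  refine ((tendsto_const_nhds.div (qFact_tendsto j) hf).mul key).congr' ?_
  filter_upwards [self_mem_nhdsWithin] with q hq
  unfold qBessel qKummer
  congr 1
  exact tsum_congr fun k => (qTerm_eq hq.2 j x k).symm
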